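/- Let p ∈ (0,1/2], let λ = σ^{−2}((1−p)³ + p³), and let β > 0. Suppose f ∈ L²({0,1}^n, μ_p) satisfies ‖D_S f‖₂² ≤ β·λ^{−|S|}·𝔼_{μ_p}[f²] for all S ⊆ [n]. Then ‖T_{1/√24} f‖₄ ≤ β^{1/4}·‖f‖₂. -/

import Mathlib

open Finset

namespace GlobalHC

variable {n : ℕ}

/-- Expectation with respect to the `p`-biased measure on `{0,1}^n`. -/
noncomputable def Ep (p : ℝ) (f : (Fin n → Bool) → ℝ) : ℝ :=
  ∑ x : Fin n → Bool, (∏ i, if x i then p else 1 - p) * f x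

/-- The `r`-norm with respect to the `p`-biased measure. -/
noncomputable def pnorm (p r : ℝ) (f : (Fin n → Bool) → ℝ) : ℝ :=
  (Ep p fun x => |f x| ^ r) ^ (1 / r)

/-- The `p`-biased character `χ_S`. -/
noncomputable def chi (p : ℝ) (S : Finset (Fin n)) (x : Fin n → Bool) : ℝ :=
  ∏ i ∈ S, ((if x i then (1 : ℝ) else 0) - p) / Real.sqrt (p * (1 - p))

/-- The `p`-biased Fourier coefficient `f̂(S)`. -/
noncomputable def coeff (p : ℝ) (f : (Fin n → Bool) → ℝ) (S : Finset (Fin n)) : ℝ :=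
  Ep p fun x => f x * chi p S x

/-- The derivative `D_S f = Σ_{T ⊇ S} f̂(T) χ_{T∖S}`. -/
noncomputable def derivS (p : ℝ) (S : Finset (Fin n)) (f : (Fin n → Bool) → ℝ) :
    (Fin n → Bool) → ℝ :=
  fun x => ∑ T ∈ Finset.univ.filter (fun T => S ⊆ T), coeff p f T * chi p (T \ S) x

/-- The generalised influence `I_S(f) = σ^{-2|S|} Σ_{T ⊇ S} f̂(T)²`. -/
noncomputable def genInf (p : ℝ) (S : Finset (Fin n)) (f : (Fin n → Bool) → ℝ) : ℝ :=
  (∑ T ∈ Finset.univ.filter (fun T => S ⊆ T), coeff p f T ^ 2) / (p * (1 - p)) ^ S.card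

/-- The noise operator `T_ρ f = Σ_S ρ^{|S|} f̂(S) χ_S`. -/
noncomputable def noise (p ρ : ℝ) (f : (Fin n → Bool) → ℝ) : (Fin n → Bool) → ℝ :=
  fun x => ∑ S : Finset (Fin n), ρ ^ S.card * coeff p f S * chi p S x

/-- The degree-`r` truncation `f^{≤ r}`. -/
noncomputable def trunc (p : ℝ) (r : ℕ) (f : (Fin n → Bool) → ℝ) : (Fin n → Bool) → ℝ :=
  fun x => ∑ S ∈ Finset.univ.filter (fun S : Finset (Fin n) => S.card ≤ r),
    coeff p f S * chi p S x

/-- The restriction `f_{J→1}` setting all coordinates in `J` to `1`. -/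
def restrict1 (J : Finset (Fin n)) (f : (Fin n → Bool) → ℝ) : (Fin n → Bool) → ℝ :=
  fun x => f (fun i => if i ∈ J then true else x i)

/-- `f` is `(r,δ)`-global (for the `p`-biased measure). -/
def IsGlobal (p r δ : ℝ) (f : (Fin n → Bool) → ℝ) : Prop :=
  ∀ J : Finset (Fin n), (J.card : ℝ) ≤ r → Ep p (restrict1 J f) ≤ Ep p f + δ

/-- The total influence `I[f] = Σ_i Pr_{μ_p}[f(x ⊕ e_i) ≠ f(x)]`. -/
noncomputable def totalInf (p : ℝ) (f : (Fin n → Bool) → ℝ) : ℝ :=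
  ∑ i : Fin n, Ep p fun x => if f (Function.update x i (!x i)) = f x then 0 else 1

/-- Noise stability `Stab_ρ(f) = Σ_S ρ^{|S|} f̂(S)²` (w.r.t. `μ_p`). -/
noncomputable def stab (p ρ : ℝ) (f : (Fin n → Bool) → ℝ) : ℝ :=
  ∑ S : Finset (Fin n), ρ ^ S.card * coeff p f S ^ 2

/-- `f` is monotone. -/
def Mono (f : (Fin n → Bool) → ℝ) : Prop :=
  ∀ x y : Fin n → Bool, (∀ i, x i ≤ y i) → f x ≤ f y


theorem Ep_add (p : ℝ) (f g : (Fin n → Bool) → ℝ) :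
    Ep p (fun x => f x + g x) = Ep p f + Ep p g := by
  simp [Ep, mul_add, Finset.sum_add_distrib]

theorem Ep_smul (p c : ℝ) (f : (Fin n → Bool) → ℝ) :
    Ep p (fun x => c * f x) = c * Ep p f := by
  simp only [Ep, Finset.mul_sum]
  exact Finset.sum_congr rfl fun x _ => by ring

theorem Ep_sum {ι : Type*} (p : ℝ) (s : Finset ι) (F : ι → (Fin n → Bool) → ℝ) :
    Ep p (fun x => ∑ j ∈ s, F j x) = ∑ j ∈ s, Ep p (F j) := by
  simp only [Ep, Finset.mul_sum]
  exact Finset.sum_comm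

theorem Ep_mono (p : ℝ) (hp : 0 < p) (hp' : p ≤ 1/2) (f g : (Fin n → Bool) → ℝ)
    (h : ∀ x, f x ≤ g x) : Ep p f ≤ Ep p g := by
  refine Finset.sum_le_sum fun x _ => mul_le_mul_of_nonneg_left (h x) ?_
  refine Finset.prod_nonneg fun i _ => ?_
  split_ifs <;> linarith

theorem Ep_nonneg (p : ℝ) (hp : 0 < p) (hp' : p ≤ 1/2) (f : (Fin n → Bool) → ℝ)
    (h : ∀ x, 0 ≤ f x) : 0 ≤ Ep p f := by
  refine Finset.sum_nonneg fun x _ => mul_nonneg ?_ (h x)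
  refine Finset.prod_nonneg fun i _ => ?_
  split_ifs <;> linarith

theorem Ep_split (p : ℝ) (i : Fin n) (G : (Fin n → Bool) → ℝ) :
    Ep p G = ∑ y : ({j // j ≠ i} → Bool), (∏ j, if y j then p else 1 - p) *
      (p * G ((Equiv.funSplitAt i Bool).symm (true, y)) +
        (1 - p) * G ((Equiv.funSplitAt i Bool).symm (false, y))) := by
  have key : ∀ (b : Bool) (y : {j // j ≠ i} → Bool),
      (∏ k, if ((Equiv.funSplitAt i Bool).symm (b, y)) k then p else 1 - p) =
        (if b then p else 1 - p) * ∏ j, if y j then p else 1 - p := by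
    intro b y
    rw [Fintype.prod_eq_mul_prod_subtype_ne _ i]
    congr 1
    · simp
    · refine Finset.prod_congr rfl fun j _ => ?_
      simp [j.2]
  rw [Ep, ← (Equiv.funSplitAt i Bool).symm.sum_comp, Fintype.sum_prod_type]
  simp only [key, Fintype.sum_bool]
  rw [← Finset.sum_add_distrib]
  refine Finset.sum_congr rfl fun y _ => ?_
  simp
  ring

theorem Ep_resample (p : ℝ) (i : Fin n) (G : (Fin n → Bool) → ℝ) :
    Ep p G = Ep p (fun x => p * G (Function.update x i true) +
      (1 - p) * G (Function.update x i false)) := by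
  have key : ∀ (b c : Bool) (y : {j // j ≠ i} → Bool),
      Function.update ((Equiv.funSplitAt i Bool).symm (b, y)) i c =
        (Equiv.funSplitAt i Bool).symm (c, y) := by
    intro b c y
    ext k
    by_cases hk : k = i
    · subst hk; simp
    · simp [hk]
  rw [Ep_split p i G, Ep_split p i]
  refine Finset.sum_congr rfl fun y _ => ?_
  simp only [key]
  ring

/-- one-coordinate character -/
noncomputable def ch (p : ℝ) (b : Bool) : ℝ :=
  ((if b then (1 : ℝ) else 0) - p) / Real.sqrt (p * (1 - p))

theorem ch_facts (p : ℝ) (hp : 0 < p) (hp' : p ≤ 1/2) :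
    p * ch p true + (1 - p) * ch p false = 0 ∧
    p * ch p true ^ 2 + (1 - p) * ch p false ^ 2 = 1 ∧
    p * ch p true ^ 4 + (1 - p) * ch p false ^ 4 = ((1 - p) ^ 3 + p ^ 3) / (p * (1 - p)) := by
  have h1 : 0 < 1 - p := by linarith
  have h2 : 0 < p * (1 - p) := mul_pos hp h1
  have hs : Real.sqrt (p * (1 - p)) ^ 2 = p * (1 - p) := Real.sq_sqrt h2.le
  have hs4 : Real.sqrt (p * (1 - p)) ^ 4 = (p * (1 - p)) ^ 2 := by
    calc _ = (Real.sqrt (p * (1 - p)) ^ 2) ^ 2 := by ring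
      _ = _ := by rw [hs]
  refine ⟨?_, ?_, ?_⟩
  · simp [ch]; ring
  · simp only [ch, div_pow, hs]
    simp
    field_simp
    ring
  · simp only [ch, div_pow, hs4]
    simp
    field_simp

theorem chi_insert (p : ℝ) (i : Fin n) (S : Finset (Fin n)) (hi : i ∉ S) (x : Fin n → Bool) :
    chi p (insert i S) x = ch p (x i) * chi p S x := by
  rw [chi, Finset.prod_insert hi]; rfl

theorem chi_update (p : ℝ) (i : Fin n) (S : Finset (Fin n)) (hi : i ∉ S) (x : Fin n → Bool)
    (b : Bool) : chi p S (Function.update x i b) = chi p S x := by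
  refine Finset.prod_congr rfl fun j hj => ?_
  have : j ≠ i := fun h => hi (h ▸ hj)
  simp [this]

theorem Ep_one (p : ℝ) : Ep p (fun _ : Fin n → Bool => (1 : ℝ)) = 1 := by
  have := Finset.prod_univ_sum (fun _ : Fin n => (Finset.univ : Finset Bool))
    (fun _ b => if b then p else 1 - p)
  simp only [Ep, mul_one]
  simp at this
  exact this.symm

theorem chi_sq (p : ℝ) (hp : 0 < p) (hp' : p ≤ 1/2) (S : Finset (Fin n)) :
    Ep p (fun x => chi p S x * chi p S x) = 1 := by
  induction S using Finset.induction_on with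
  | empty => simpa [chi] using Ep_one p
  | insert i S hi ih =>
    rw [Ep_resample p i]
    refine Eq.trans ?_ ih
    congr 1
    ext x
    simp only [chi_insert p i S hi, chi_update p i S hi, Function.update_self]
    linear_combination chi p S x * chi p S x * (ch_facts p hp hp').2.1

theorem chi_orth_aux (p : ℝ) (hp : 0 < p) (hp' : p ≤ 1/2) (S T : Finset (Fin n)) (i : Fin n)
    (hS : i ∈ S) (hT : i ∉ T) : Ep p (fun x => chi p S x * chi p T x) = 0 := by
  have hi := Finset.notMem_erase i S
  rw [← Finset.insert_erase hS, Ep_resample p i]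
  simp only [chi_insert p i _ hi, chi_update p i _ hi, chi_update p i T hT, Function.update_self]
  have : ∀ x : Fin n → Bool, p * (ch p true * chi p (S.erase i) x * chi p T x) +
      (1 - p) * (ch p false * chi p (S.erase i) x * chi p T x) = 0 := fun x => by
    linear_combination chi p (S.erase i) x * chi p T x * (ch_facts p hp hp').1
  simp [this, Ep]

theorem chi_orth (p : ℝ) (hp : 0 < p) (hp' : p ≤ 1/2) (S T : Finset (Fin n)) :
    Ep p (fun x => chi p S x * chi p T x) = if S = T then 1 else 0 := by
  split_ifs with h
  · subst h; exact chi_sq p hp hp' S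
  · by_cases h1 : S ⊆ T
    · have h2 : ¬ T ⊆ S := fun h2 => h (h1.antisymm h2)
      obtain ⟨i, hi, hi'⟩ := Finset.not_subset.1 h2
      rw [← chi_orth_aux p hp hp' T S i hi hi']
      simp only [mul_comm]
    · obtain ⟨i, hi, hi'⟩ := Finset.not_subset.1 h1
      exact chi_orth_aux p hp hp' S T i hi hi'

theorem parseval {ι : Type*} [DecidableEq ι] (p : ℝ) (hp : 0 < p) (hp' : p ≤ 1/2) (s : Finset ι)
    (a : ι → ℝ) (φ : ι → Finset (Fin n)) (hφ : Set.InjOn φ s) :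
    Ep p (fun x => (∑ j ∈ s, a j * chi p (φ j) x) ^ 2) = ∑ j ∈ s, a j ^ 2 := by
  have : ∀ x : Fin n → Bool, (∑ j ∈ s, a j * chi p (φ j) x) ^ 2 =
      ∑ j ∈ s, ∑ k ∈ s, (a j * a k) * (chi p (φ j) x * chi p (φ k) x) := fun x => by
    rw [sq, Finset.sum_mul_sum]
    exact Finset.sum_congr rfl fun j _ => Finset.sum_congr rfl fun k _ => by ring
  simp only [this, Ep_sum, Ep_smul, chi_orth p hp hp']
  refine Finset.sum_congr rfl fun j hj => ?_
  rw [Finset.sum_eq_single j]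
  · simp; ring
  · intro k hk hkj
    rw [if_neg, mul_zero]
    exact fun h => hkj (hφ hk hj h.symm)
  · exact fun h => absurd hj h

theorem bessel (p : ℝ) (hp : 0 < p) (hp' : p ≤ 1/2) (f : (Fin n → Bool) → ℝ) :
    ∑ S : Finset (Fin n), coeff p f S ^ 2 ≤ Ep p (fun x => f x ^ 2) := by
  have h0 := Ep_nonneg p hp hp' (fun x => (f x - ∑ S : Finset (Fin n), coeff p f S * chi p S x) ^ 2)
    (fun x => sq_nonneg _)
  have h1 : ∀ x, (f x - ∑ S : Finset (Fin n), coeff p f S * chi p S x) ^ 2 =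
      (f x ^ 2 + (-2) * ∑ S : Finset (Fin n), coeff p f S * (f x * chi p S x)) +
        (∑ S : Finset (Fin n), coeff p f S * chi p S x) ^ 2 := fun x => by
    have : ∑ S : Finset (Fin n), coeff p f S * (f x * chi p S x) =
        f x * ∑ S : Finset (Fin n), coeff p f S * chi p S x := by
      rw [Finset.mul_sum]; exact Finset.sum_congr rfl fun _ _ => by ring
    rw [this]; ring
  simp only [h1] at h0
  rw [Ep_add, Ep_add, Ep_smul, Ep_sum,
    parseval p hp hp' Finset.univ (coeff p f) (fun S => S) (fun _ _ _ _ h => h)] at h0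
  simp only [Ep_smul] at h0
  have h2 : ∑ S : Finset (Fin n), coeff p f S * Ep p (fun x => f x * chi p S x) =
      ∑ S : Finset (Fin n), coeff p f S ^ 2 :=
    Finset.sum_congr rfl fun S _ => by rw [sq]; rfl
  rw [h2] at h0
  linarith

theorem two_point (p u v l g0 g1 h0 h1 : ℝ) (hp : 0 ≤ p) (hp' : p ≤ 1)
    (e1 : p * u + (1 - p) * v = 0) (e2 : p * u ^ 2 + (1 - p) * v ^ 2 = 1)
    (e4 : p * u ^ 4 + (1 - p) * v ^ 4 = l) :
    p * ((g0 + u * g1) ^ 2 * (h0 + u * h1) ^ 2) + (1 - p) * ((g0 + v * g1) ^ 2 * (h0 + v * h1) ^ 2)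
      ≤ g0 ^ 2 * h0 ^ 2 + 4 * (g0 ^ 2 * h1 ^ 2) + 4 * (g1 ^ 2 * h0 ^ 2)
        + 16 * l * (g1 ^ 2 * h1 ^ 2) := by
  obtain ⟨m, e3⟩ : ∃ m, p * u ^ 3 + (1 - p) * v ^ 3 = m := ⟨_, rfl⟩
  have hm : m ^ 2 ≤ l := by
    have : 0 ≤ p * (u ^ 2 - m * u) ^ 2 + (1 - p) * (v ^ 2 - m * v) ^ 2 :=
      add_nonneg (mul_nonneg hp (sq_nonneg _)) (mul_nonneg (by linarith) (sq_nonneg _))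
    have e : p * (u ^ 2 - m * u) ^ 2 + (1 - p) * (v ^ 2 - m * v) ^ 2 = l - m ^ 2 := by
      linear_combination e4 - 2 * m * e3 + m ^ 2 * e2
    linarith
  have e : p * ((g0 + u * g1) ^ 2 * (h0 + u * h1) ^ 2)
      + (1 - p) * ((g0 + v * g1) ^ 2 * (h0 + v * h1) ^ 2) =
      g0 ^ 2 * h0 ^ 2 + (g0 ^ 2 * h1 ^ 2 + g1 ^ 2 * h0 ^ 2 + 4 * g0 * g1 * h0 * h1)
       + 2 * m * (g0 * g1 * h1 ^ 2 + h0 * h1 * g1 ^ 2) + l * (g1 ^ 2 * h1 ^ 2) := by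
    linear_combination (2 * g0 * g1 * h0 ^ 2 + 2 * h0 * h1 * g0 ^ 2) * e1 +
      (g0 ^ 2 * h1 ^ 2 + g1 ^ 2 * h0 ^ 2 + 4 * g0 * g1 * h0 * h1) * e2 +
      2 * (g0 * g1 * h1 ^ 2 + h0 * h1 * g1 ^ 2) * e3 + (g1 ^ 2 * h1 ^ 2) * e4
  rw [e]
  have i1 := sq_nonneg (g0 * h1 - g1 * h0)
  have i2 := sq_nonneg (g0 * h1 - m * (g1 * h1))
  have i3 := sq_nonneg (g1 * h0 - m * (g1 * h1))
  have i4 := mul_le_mul_of_nonneg_right hm (mul_nonneg (sq_nonneg g1) (sq_nonneg h1))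
  have i5 := mul_nonneg (mul_nonneg (sq_nonneg g1) (sq_nonneg h1)) ((sq_nonneg m).trans hm)
  nlinarith

/-- weighted mass above `S` -/
noncomputable def V (U S : Finset (Fin n)) (a : Finset (Fin n) → ℝ) : ℝ :=
  ∑ T ∈ U.powerset, if S ⊆ T then 4 ^ T.card * a T ^ 2 else 0

theorem V_nonneg (U S : Finset (Fin n)) (a : Finset (Fin n) → ℝ) : 0 ≤ V U S a :=
  Finset.sum_nonneg fun T _ => by split_ifs <;> positivity

theorem V_insert_left (i : Fin n) (U S : Finset (Fin n)) (hU : i ∉ U) (hS : S ⊆ U)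
    (a : Finset (Fin n) → ℝ) :
    V (insert i U) S a = V U S a + 4 * V U S (fun T => a (insert i T)) := by
  rw [V, Finset.sum_powerset_insert hU, V, V, Finset.mul_sum]
  congr 1
  refine Finset.sum_congr rfl fun T hT => ?_
  have hT' : i ∉ T := fun h => hU (Finset.mem_powerset.1 hT h)
  have : S ⊆ insert i T ↔ S ⊆ T := Finset.subset_insert_iff_of_notMem fun h => hU (hS h)
  simp only [this, Finset.card_insert_of_notMem hT']
  split_ifs
  · ring
  · simp

theorem V_insert_right (i : Fin n) (U S : Finset (Fin n)) (hU : i ∉ U) (hS : S ⊆ U)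
    (a : Finset (Fin n) → ℝ) :
    V (insert i U) (insert i S) a = 4 * V U S (fun T => a (insert i T)) := by
  rw [V, Finset.sum_powerset_insert hU, V, Finset.mul_sum]
  have h0 : ∑ T ∈ U.powerset, (if insert i S ⊆ T then (4 : ℝ) ^ T.card * a T ^ 2 else 0) = 0 := by
    refine Finset.sum_eq_zero fun T hT => ?_
    rw [if_neg]
    exact fun h => hU (Finset.mem_powerset.1 hT (h (Finset.mem_insert_self i S)))
  rw [h0, zero_add]
  refine Finset.sum_congr rfl fun T hT => ?_
  have hT' : i ∉ T := fun h => hU (Finset.mem_powerset.1 hT h)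
  have hS' : i ∉ S := fun h => hU (hS h)
  have : insert i S ⊆ insert i T ↔ S ⊆ T := Finset.insert_subset_insert_iff hS'
  simp only [this, Finset.card_insert_of_notMem hT']
  split_ifs
  · ring
  · simp

theorem main_ineq (p : ℝ) (hp : 0 < p) (hp' : p ≤ 1/2)
    (lam : ℝ) (hlam : lam = ((1 - p) ^ 3 + p ^ 3) / (p * (1 - p))) (hl : 0 ≤ lam)
    (U : Finset (Fin n)) : ∀ a b : Finset (Fin n) → ℝ,
    Ep p (fun x => (∑ S ∈ U.powerset, a S * chi p S x) ^ 2 *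
      (∑ S ∈ U.powerset, b S * chi p S x) ^ 2) ≤
      ∑ S ∈ U.powerset, lam ^ S.card * (V U S a * V U S b) := by
  induction U using Finset.induction_on with
  | empty =>
    intro a b
    have := Ep_smul p (a ∅ ^ 2 * b ∅ ^ 2) (fun _ : Fin n → Bool => (1:ℝ))
    rw [Ep_one] at this
    simp [V, chi] at this ⊢
    exact this.le
  | insert i U hU ih =>
    intro a b
    have hexp : ∀ (a : Finset (Fin n) → ℝ) (x : Fin n → Bool) (c : Bool),
        ∑ S ∈ (insert i U).powerset, a S * chi p S (Function.update x i c) =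
        (∑ S ∈ U.powerset, a S * chi p S x) +
          ch p c * (∑ S ∈ U.powerset, a (insert i S) * chi p S x) := by
      intro a x c
      rw [Finset.sum_powerset_insert hU, Finset.mul_sum]
      congr 1
      · refine Finset.sum_congr rfl fun T hT => ?_
        have hT' : i ∉ T := fun h => hU (Finset.mem_powerset.1 hT h)
        rw [chi_update p i T hT']
      · refine Finset.sum_congr rfl fun T hT => ?_
        have hT' : i ∉ T := fun h => hU (Finset.mem_powerset.1 hT h)
        rw [chi_insert p i T hT', chi_update p i T hT', Function.update_self]
        ring
    obtain ⟨e1, e2, e4⟩ := ch_facts p hp hp'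
    rw [← hlam] at e4
    rw [Ep_resample p i]
    simp only [hexp]
    refine (Ep_mono p hp hp' _ _ fun x => two_point p (ch p true) (ch p false) lam _ _ _ _
      hp.le (by linarith) e1 e2 e4).trans ?_
    rw [Ep_add, Ep_add, Ep_add, Ep_smul, Ep_smul, Ep_smul]
    have k1 := ih a b
    have k2 := ih a (fun T => b (insert i T))
    have k3 := ih (fun T => a (insert i T)) b
    have k4 := ih (fun T => a (insert i T)) (fun T => b (insert i T))
    have k5 := mul_le_mul_of_nonneg_left k4 (mul_nonneg (by norm_num : (0:ℝ) ≤ 16) hl)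
    have k6 : 0 ≤ ∑ S ∈ U.powerset, lam ^ S.card *
        (V U S (fun T => a (insert i T)) * V U S (fun T => b (insert i T))) :=
      Finset.sum_nonneg fun S _ => mul_nonneg (pow_nonneg hl _)
        (mul_nonneg (V_nonneg _ _ _) (V_nonneg _ _ _))
    have k7 : ∑ S ∈ (insert i U).powerset, lam ^ S.card * (V (insert i U) S a * V (insert i U) S b)
        = ∑ S ∈ U.powerset, lam ^ S.card * (V U S a * V U S b)
        + 4 * ∑ S ∈ U.powerset, lam ^ S.card * (V U S a * V U S (fun T => b (insert i T)))
        + 4 * ∑ S ∈ U.powerset, lam ^ S.card * (V U S (fun T => a (insert i T)) * V U S b)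
        + (16 + 16 * lam) * ∑ S ∈ U.powerset, lam ^ S.card *
          (V U S (fun T => a (insert i T)) * V U S (fun T => b (insert i T))) := by
      rw [Finset.sum_powerset_insert hU]
      simp only [Finset.mul_sum, ← Finset.sum_add_distrib]
      refine Finset.sum_congr rfl fun S hS => ?_
      have hS' := Finset.mem_powerset.1 hS
      rw [V_insert_left i U S hU hS', V_insert_left i U S hU hS', V_insert_right i U S hU hS',
        V_insert_right i U S hU hS', Finset.card_insert_of_notMem fun h => hU (hS' h)]
      ring
    rw [k7]
    linarith

theorem pnorm_two_sq (p : ℝ) (hp : 0 < p) (hp' : p ≤ 1/2) (f : (Fin n → Bool) → ℝ) :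
    pnorm p 2 f ^ 2 = Ep p (fun x => f x ^ 2) := by
  have h : (fun x => |f x| ^ (2:ℝ)) = fun x => f x ^ 2 := by
    ext x
    rw [Real.rpow_two, sq_abs]
  rw [pnorm, h, ← Real.sqrt_eq_rpow, Real.sq_sqrt]
  exact Ep_nonneg p hp hp' _ fun x => sq_nonneg _

theorem fourth_bound (p β : ℝ) (hp : 0 < p) (hp' : p ≤ 1/2) (hβ : 0 < β)
    (lam : ℝ) (hlam : lam = ((1 - p) ^ 3 + p ^ 3) / (p * (1 - p)))
    (f : (Fin n → Bool) → ℝ)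
    (hder : ∀ S : Finset (Fin n),
      pnorm p 2 (derivS p S f) ^ 2 ≤ β * lam ^ (-(S.card : ℤ)) * Ep p (fun x => f x ^ 2)) :
    Ep p (fun x => noise p (1 / Real.sqrt 24) f x ^ 4) ≤ β * Ep p (fun x => f x ^ 2) ^ 2 := by
  have h1p : 0 < 1 - p := by linarith
  have hl : 0 < lam := by rw [hlam]; positivity
  set E := Ep p (fun x => f x ^ 2) with hE
  have hE0 : 0 ≤ E := Ep_nonneg p hp hp' _ fun x => sq_nonneg _
  set a : Finset (Fin n) → ℝ := fun S => (1 / Real.sqrt 24) ^ S.card * coeff p f S with ha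
  have hm := main_ineq p hp hp' lam hlam hl.le (Finset.univ : Finset (Fin n)) a a
  have hn : ∀ x : Fin n → Bool, noise p (1 / Real.sqrt 24) f x ^ 4 =
      (∑ S ∈ (Finset.univ : Finset (Fin n)).powerset, a S * chi p S x) ^ 2 *
      (∑ S ∈ (Finset.univ : Finset (Fin n)).powerset, a S * chi p S x) ^ 2 := fun x => by
    rw [Finset.powerset_univ]
    simp only [noise, ha]
    ring
  simp only [hn]
  refine hm.trans ?_
  rw [Finset.powerset_univ]
  have hsq : ∀ T : Finset (Fin n), (4:ℝ) ^ T.card * a T ^ 2 = (1/6) ^ T.card * coeff p f T ^ 2 := by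
    intro T
    have h24 : (1 / Real.sqrt 24) ^ 2 = 1 / 24 := by
      rw [div_pow, Real.sq_sqrt (by norm_num)]; norm_num
    simp only [ha]
    rw [mul_pow, ← pow_mul, mul_comm T.card 2, pow_mul, h24, ← mul_assoc, ← mul_pow]
    norm_num
  have hV : ∀ S : Finset (Fin n), V Finset.univ S a =
      ∑ T : Finset (Fin n), if S ⊆ T then (1/6) ^ T.card * coeff p f T ^ 2 else 0 := by
    intro S
    simp only [V, Finset.powerset_univ, hsq]
  have hD : ∀ S : Finset (Fin n), lam ^ S.card * V Finset.univ S a ≤ β * E := by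
    intro S
    have h1 : V Finset.univ S a ≤ pnorm p 2 (derivS p S f) ^ 2 := by
      rw [pnorm_two_sq p hp hp', hV]
      simp only [derivS]
      rw [parseval p hp hp' _ (coeff p f) (fun T => T \ S), Finset.sum_filter]
      · refine Finset.sum_le_sum fun T _ => ?_
        split_ifs
        · have : ((1:ℝ)/6) ^ T.card ≤ 1 := pow_le_one₀ (by norm_num) (by norm_num)
          nlinarith [sq_nonneg (coeff p f T)]
        · exact le_rfl
      · intro T hT T' hT' h
        simp at hT hT'
        simp only at h
        rw [← Finset.sdiff_union_of_subset hT, h, Finset.sdiff_union_of_subset hT']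
    have h2 := mul_le_mul_of_nonneg_left (h1.trans (hder S)) (pow_nonneg hl.le S.card)
    have h3 : lam ^ S.card * lam ^ (-(S.card : ℤ)) = 1 := by
      rw [zpow_neg, zpow_natCast]
      exact mul_inv_cancel₀ (pow_ne_zero _ hl.ne')
    calc _ ≤ _ := h2
      _ = (lam ^ S.card * lam ^ (-(S.card : ℤ))) * (β * E) := by ring
      _ = β * E := by rw [h3, one_mul]
  have hS : ∑ S : Finset (Fin n), V Finset.univ S a ≤ E := by
    refine le_trans ?_ (bessel p hp hp' f)
    simp only [hV]
    rw [Finset.sum_comm]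
    refine Finset.sum_le_sum fun T _ => ?_
    rw [← Finset.sum_filter, Finset.sum_const]
    have hc : (Finset.univ.filter fun S : Finset (Fin n) => S ⊆ T) = T.powerset := by
      ext S; simp
    rw [hc, Finset.card_powerset, nsmul_eq_mul, ← mul_assoc]
    push_cast
    rw [← mul_pow]
    have : ((2:ℝ) * (1/6)) ^ T.card ≤ 1 := pow_le_one₀ (by norm_num) (by norm_num)
    nlinarith [sq_nonneg (coeff p f T)]
  calc ∑ S : Finset (Fin n), lam ^ S.card * (V Finset.univ S a * V Finset.univ S a)
      ≤ ∑ S : Finset (Fin n), (β * E) * V Finset.univ S a := by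
        refine Finset.sum_le_sum fun S _ => ?_
        rw [← mul_assoc]
        exact mul_le_mul_of_nonneg_right (hD S) (V_nonneg _ _ _)
    _ = (β * E) * ∑ S : Finset (Fin n), V Finset.univ S a := by rw [Finset.mul_sum]
    _ ≤ (β * E) * E := mul_le_mul_of_nonneg_left hS (by positivity)
    _ = β * E ^ 2 := by ring

/-- hypercontractivity under a derivative-norm hypothesis. -/
theorem statement2 {n : ℕ} (p β : ℝ) (hp : 0 < p) (hp' : p ≤ 1/2) (hβ : 0 < β)
    (lam : ℝ) (hlam : lam = ((1 - p) ^ 3 + p ^ 3) / (p * (1 - p)))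
    (f : (Fin n → Bool) → ℝ)
    (hder : ∀ S : Finset (Fin n),
      pnorm p 2 (derivS p S f) ^ 2 ≤ β * lam ^ (-(S.card : ℤ)) * Ep p (fun x => f x ^ 2)) :
    pnorm p 4 (noise p (1 / Real.sqrt 24) f) ≤ β ^ ((1 : ℝ)/4) * pnorm p 2 f := by
  have h := fourth_bound p β hp hp' hβ lam hlam f hder
  have hE0 : 0 ≤ Ep p (fun x => f x ^ 2) := Ep_nonneg p hp hp' _ fun x => sq_nonneg _
  have h2 : (fun x => |f x| ^ (2:ℝ)) = fun x => f x ^ 2 := by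
    ext x
    rw [Real.rpow_two, sq_abs]
  have h4 : (fun x => |noise p (1 / Real.sqrt 24) f x| ^ (4:ℝ)) =
      fun x => noise p (1 / Real.sqrt 24) f x ^ 4 := by
    ext x
    have : |noise p (1 / Real.sqrt 24) f x| ^ (4:ℝ) = |noise p (1 / Real.sqrt 24) f x| ^ 4 := by
      exact_mod_cast Real.rpow_natCast _ 4
    rw [this, Even.pow_abs (by decide)]
  rw [pnorm, pnorm, h2, h4]
  have h0 : 0 ≤ Ep p (fun x => noise p (1 / Real.sqrt 24) f x ^ 4) :=
    Ep_nonneg p hp hp' _ fun x => by positivity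
  refine (Real.rpow_le_rpow h0 h (by norm_num)).trans (le_of_eq ?_)
  rw [Real.mul_rpow hβ.le (by positivity), ← Real.rpow_natCast, ← Real.rpow_mul hE0]
  norm_num

end GlobalHC
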